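/- arXiv:2505.17277 — 3 statements merged into one kernel-verified Lean document; each statement's English description precedes it below -/
import Mathlib

section
/- The meta MWU algorithm achieves near-optimal ε-quantile regret: there is a universal constant C > 0 such that for every d ≥ 2, T ≥ 1, every loss sequence ℓ_1,…,ℓ_T ∈ [0,1]^d, and every ε ∈ [1/d, 1], the iterates p_t of the algorithm satisfy Reg_ε = Σ_{t=1}^T ⟨p_t, ℓ_t⟩ − Σ_{t=1}^T ℓ_{t,i_ε} ≤ C·(√(T·log(2/ε)) + √(T·(1 + log(1 + log d)))), where i_ε is an expert whose cumulative loss Σ_{t=1}^T ℓ_{t,i} is the ⌈εd⌉-th smallest among the d experts. -/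
open Finset

/-- The binary row-stochastic matrix associated with a map `f : [d] → [d]`. -/
def toMat (d : ℕ) (f : Fin d → Fin d) : Matrix (Fin d) (Fin d) ℝ :=
  fun i j => if f i = j then 1 else 0

/-- The set `Φ_b` of binary row-stochastic `d × d` matrices. -/
noncomputable def PhiB (d : ℕ) : Finset (Matrix (Fin d) (Fin d) ℝ) := by
  classical exact Finset.image (toMat d) Finset.univ

/-- A matrix is row-stochastic if every row lies in the simplex. -/
def RowStochastic {d : ℕ} (φ : Matrix (Fin d) (Fin d) ℝ) : Prop :=
  ∀ i, (∀ j, 0 ≤ φ i j) ∧ ∑ j, φ i j = 1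

/-- A vector lies in the probability simplex `Δ(d)`. -/
def InSimplex (d : ℕ) (p : Fin d → ℝ) : Prop :=
  (∀ i, 0 ≤ p i) ∧ ∑ i, p i = 1

/-- The `ψ`-induced weight of `φ`: `π_ψ(φ) = ∏ i ⟨ψ_{i:}, φ_{i:}⟩`. -/
noncomputable def piInd {d : ℕ} (ψ φ : Matrix (Fin d) (Fin d) ℝ) : ℝ :=
  ∏ i, ∑ j, ψ i j * φ i j

/-- `ψ^k = ((d-2)/(d-1))·1 e_k^T + (1/(d(d-1)))·1 1^T`. -/
noncomputable def psiK (d : ℕ) (k : Fin d) : Matrix (Fin d) (Fin d) ℝ :=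
  fun _ j => ((d : ℝ) - 2) / ((d : ℝ) - 1) * (if j = k then 1 else 0) + 1 / ((d : ℝ) * ((d : ℝ) - 1))

/-- `ψ^{d+1} = ((d-2)/(d-1))·I + (1/(d(d-1)))·1 1^T`. -/
noncomputable def psiSelf (d : ℕ) : Matrix (Fin d) (Fin d) ℝ :=
  fun i j => ((d : ℝ) - 2) / ((d : ℝ) - 1) * (if i = j then 1 else 0) + 1 / ((d : ℝ) * ((d : ℝ) - 1))

/-- The special prior `π = (1/(2d)) Σ_k π_{ψ^k} + (1/2) π_{ψ^{d+1}}`. -/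
noncomputable def priorPi (d : ℕ) (φ : Matrix (Fin d) (Fin d) ℝ) : ℝ :=
  1 / (2 * d) * ∑ k : Fin d, piInd (psiK d k) φ + 1 / 2 * piInd (psiSelf d) φ

/-- `d^self_φ`: the number of indices `i` whose row equals `e_i^T`. -/
noncomputable def dSelf {d : ℕ} (φ : Matrix (Fin d) (Fin d) ℝ) : ℕ :=
  Nat.card {i : Fin d // φ i = fun j => if j = i then (1 : ℝ) else 0}

/-- `d^unif_φ`: the maximum multiplicity in the multiset of rows of `φ`. -/
noncomputable def dUnif {d : ℕ} (φ : Matrix (Fin d) (Fin d) ℝ) : ℕ :=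
  Finset.univ.sup fun i : Fin d => Nat.card {j : Fin d // φ j = φ i}

/-- Complexity measure for binary row-stochastic matrices. -/
noncomputable def cB {d : ℕ} (φ : Matrix (Fin d) (Fin d) ℝ) : ℕ :=
  min (d - dSelf φ) (d - dUnif φ + 1)

/-- `Q_φ`: distributions over `Φ_b` (indexed by maps `f : [d] → [d]`) averaging to `φ`. -/
def QSet (d : ℕ) (φ : Matrix (Fin d) (Fin d) ℝ) : Set ((Fin d → Fin d) → ℝ) :=
  {q | (∀ f, 0 ≤ q f) ∧ (∑ f, q f = 1) ∧ ∀ i j, ∑ f, q f * toMat d f i j = φ i j}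

/-- Extended complexity measure `c_φ = inf_{q ∈ Q_φ} E_{φ'∼q}[c_{φ'}]`. -/
noncomputable def cGen (d : ℕ) (φ : Matrix (Fin d) (Fin d) ℝ) : ℝ :=
  sInf ((fun q => ∑ f : Fin d → Fin d, q f * (cB (toMat d f) : ℝ)) '' QSet d φ)

/-- Matrix inner product `⟨φ, p ℓ^T⟩`. -/
noncomputable def lossInner {d : ℕ} (φ : Matrix (Fin d) (Fin d) ℝ) (p ℓ : Fin d → ℝ) : ℝ :=
  ∑ i, ∑ j, φ i j * (p i * ℓ j)

/-- The mean matrix `E_{f∼q}[φ_f]` of a weight vector over binary matrices. -/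
noncomputable def mixMat (d : ℕ) (q : (Fin d → Fin d) → ℝ) : Matrix (Fin d) (Fin d) ℝ :=
  fun i j => ∑ f, q f * toMat d f i j

/-- KL divergence of `q` (a distribution over `Φ_b`, indexed by maps) from the prior `π`. -/
noncomputable def klPrior (d : ℕ) (q : (Fin d → Fin d) → ℝ) : ℝ :=
  ∑ f, q f * Real.log (q f / priorPi d (toMat d f))

/-- The kernel `K(B,A) = Σ_{φ∈Φ_b} π(φ) Π_{i,j : φ_{ij}=1} B_{ij} A_{ij}`. -/
noncomputable def kernelK (d : ℕ) (B A : Matrix (Fin d) (Fin d) ℝ) : ℝ := by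
  classical exact
    ∑ φ ∈ PhiB d, priorPi d φ * ∏ i, ∏ j, if φ i j = 1 then B i j * A i j else 1

/-!
Since `p_t` is stationary for `φ_t`, the learner's loss `⟨p_t, ℓ_t⟩` equals `⟨φ_t, p_t ℓ_t^T⟩`,
which is the loss of the meta learner. Hence the regret is that of the meta learner against a base
learner `h` plus that of `h` against a set of constant maps `i ↦ k`, whose loss is the loss of
expert `k`.

Multiplicative weights with rate `η` competes with a set of prior mass `c` up to
`log (1 / c) / η + η T / 2`. The meta learner has mass `1 / M` on each base learner. The prior of
a base learner gives each constant map mass at least `1 / (8 d)`, because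
`(1 - 1 / d) ^ d ≥ 1 / 4`, so the best `⌈ε d⌉` of them have mass at least `ε / 8`. As
`2 ≤ log (8 / ε) < d ^ 2 ≤ 2 ^ M`, some `h` on the grid has `2 ^ h` within a factor `2` of
`log (8 / ε)`, and its rate is optimal up to a constant.
-/

lemma exp_neg_le_quadratic {x : ℝ} (hx : 0 ≤ x) : Real.exp (-x) ≤ 1 - x + x ^ 2 / 2 := by
  have hpos : 0 ≤ 1 - x + x ^ 2 / 2 := by nlinarith [sq_nonneg (x - 1)]
  rw [Real.exp_neg, inv_le_iff_one_le_mul₀ (Real.exp_pos x)]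
  calc 1 ≤ (1 - x + x ^ 2 / 2) * (1 + x + x ^ 2 / 2) := by nlinarith [sq_nonneg (x ^ 2)]
    _ ≤ (1 - x + x ^ 2 / 2) * Real.exp x := by
        gcongr
        exact Real.quadratic_le_exp_of_nonneg hx

lemma one_quarter_le_one_sub_one_div_pow {n : ℕ} (hn : 2 ≤ n) :
    (1 / 4 : ℝ) ≤ (1 - 1 / (n : ℝ)) ^ n := by
  have hn' : (2 : ℝ) ≤ n := by exact_mod_cast hn
  have hinv : 1 / (n : ℝ) ≤ 1 := (div_le_one (by linarith)).2 (by linarith)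
  -- Bernoulli's inequality at the exponent `n` is void, so it is applied at `n / 2` and squared.
  have hhalf : (1 / 2 : ℝ) ≤ (1 - 1 / (n : ℝ)) ^ ((n : ℝ) / 2) := by
    have hbern := one_add_mul_self_le_rpow_one_add (neg_le_neg hinv)
      (show (1 : ℝ) ≤ n / 2 by linarith)
    rw [← sub_eq_add_neg] at hbern
    refine le_of_eq_of_le ?_ hbern
    field_simp
    norm_num
  calc (1 / 4 : ℝ) = (1 / 2) ^ 2 := by norm_num
    _ ≤ ((1 - 1 / (n : ℝ)) ^ ((n : ℝ) / 2)) ^ 2 := by gcongr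
    _ = (1 - 1 / (n : ℝ)) ^ n := by
        rw [← Real.rpow_mul_natCast (sub_nonneg.2 hinv), Nat.cast_ofNat,
          div_mul_cancel₀ _ two_ne_zero, Real.rpow_natCast]

lemma div_sqrt_add_sqrt_mul_half_le {x y T : ℝ} (hT : 0 < T) (hy : 0 < y) (hyx : y ≤ x)
    (hxy : x ≤ 2 * y) : x / √(y / T) + √(y / T) * T / 2 ≤ 2 * √(T * x) := by
  have ha : 0 < √y := Real.sqrt_pos.2 hy
  have hab : √y ≤ √x := Real.sqrt_le_sqrt hyx
  have hx2 : √x ^ 2 = x := Real.sq_sqrt (hy.le.trans hyx)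
  have hy2 : √y ^ 2 = y := Real.sq_sqrt hy.le
  have hba : √x ≤ 3 / 2 * √y := le_of_sq_le_sq (by nlinarith) (by positivity)
  have hratio : √x ^ 2 / √y ≤ 3 / 2 * √x := by
    rw [div_le_iff₀ ha]
    nlinarith
  calc x / √(y / T) + √(y / T) * T / 2 = √T * (√x ^ 2 / √y + √y / 2) := by
        rw [Real.sqrt_div hy.le, hx2, div_div_eq_mul_div, div_mul_eq_mul_div, mul_div_assoc _ T,
          Real.div_sqrt]
        ring
    _ ≤ √T * (2 * √x) := by
        gcongr
        linarith
    _ = 2 * √(T * x) := by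
        rw [Real.sqrt_mul hT.le]
        ring

lemma sqrt_mul_le_two_mul_sqrt_mul {T x y : ℝ} (hT : 0 ≤ T) (hxy : x ≤ 4 * y) :
    √(T * x) ≤ 2 * √(T * y) := by
  calc √(T * x) ≤ √(2 ^ 2 * (T * y)) := Real.sqrt_le_sqrt (by nlinarith)
    _ = 2 * √(T * y) := by rw [Real.sqrt_mul (by positivity), Real.sqrt_sq zero_le_two]

lemma exists_pow_le_lt_mul_pow {x b : ℝ} {N : ℕ} (hb : 1 < b) (hx : b ≤ x) (hN : x < b ^ N) :
    ∃ n ∈ Ico 1 N, b ^ n ≤ x ∧ x < b * b ^ n := by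
  obtain ⟨n, hle, hlt⟩ := exists_nat_pow_near (hb.le.trans hx) hb
  refine ⟨n, mem_Ico.2 ⟨?_, (pow_lt_pow_iff_right₀ hb).1 (hle.trans_lt hN)⟩, hle, ?_⟩
  · rw [Nat.one_le_iff_ne_zero]
    rintro rfl
    rw [zero_add, pow_one] at hlt
    exact hx.not_gt hlt
  · rwa [← pow_succ']

lemma log_two_mul_clog_le {d : ℕ} (hd : 2 ≤ d) :
    Real.log (2 * Nat.clog 2 d) ≤ 4 * (1 + Real.log (1 + Real.log d)) := by
  have hlogd : 0 ≤ Real.log d := Real.log_natCast_nonneg d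
  have hclog : (Nat.clog 2 d : ℝ) ≤ 2 * (1 + Real.log d) := by
    have hlogb : Real.logb 2 d ≤ 2 * Real.log d := by
      rw [Real.logb, div_le_iff₀ (Real.log_pos one_lt_two)]
      nlinarith [Real.log_two_gt_d9]
    have hceil := Nat.ceil_lt_add_one (Real.logb_nonneg one_lt_two
      (show (1 : ℝ) ≤ d by exact_mod_cast (by lia)))
    rw [← Nat.cast_ofNat, Real.natCeil_logb_natCast] at hceil
    push_cast at hceil
    linarith
  have hpos : (0 : ℝ) < 2 * Nat.clog 2 d := by
    have := Nat.clog_pos one_lt_two hd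
    positivity
  have hlog4 : Real.log 4 ≤ 3 := by linarith [Real.log_le_sub_one_of_pos (x := 4) (by norm_num)]
  calc Real.log (2 * Nat.clog 2 d) ≤ Real.log (4 * (1 + Real.log d)) :=
        Real.log_le_log hpos (by linarith)
    _ = Real.log 4 + Real.log (1 + Real.log d) := Real.log_mul (by norm_num) (by positivity)
    _ ≤ 4 * (1 + Real.log (1 + Real.log d)) := by
        linarith [Real.log_nonneg (show 1 ≤ 1 + Real.log d by linarith)]

lemma two_le_log_eight_div {ε : ℝ} (hε : 0 < ε) (hε1 : ε ≤ 1) : 2 ≤ Real.log (8 / ε) := by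
  rw [Real.le_log_iff_exp_le (by positivity)]
  calc Real.exp 2 = Real.exp 1 ^ 2 := by rw [← Real.exp_nat_mul]; norm_num
    _ ≤ 2.7182818286 ^ 2 := by
        gcongr
        exact Real.exp_one_lt_d9.le
    _ ≤ 8 / 1 := by norm_num
    _ ≤ 8 / ε := by gcongr

lemma log_eight_mul_lt_sq {x : ℝ} (hx : 2 ≤ x) : Real.log (8 * x) < x ^ 2 := by
  have hlog8 : Real.log 8 < 3 := by
    rw [show (8 : ℝ) = 2 ^ 3 by norm_num, Real.log_pow]
    norm_num
    linarith [Real.log_two_lt_d9]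
  rw [Real.log_mul (by norm_num) (by positivity)]
  nlinarith [Real.log_le_sub_one_of_pos (show 0 < x by linarith)]

lemma log_eight_div_le_four_mul {ε : ℝ} (hε : 0 < ε) (hε1 : ε ≤ 1) :
    Real.log (8 / ε) ≤ 4 * Real.log (2 / ε) := by
  have hlogε : Real.log ε ≤ 0 := Real.log_nonpos hε.le hε1
  have hlog8 : Real.log 8 = 3 * Real.log 2 := by
    rw [show (8 : ℝ) = 2 ^ 3 by norm_num, Real.log_pow, Nat.cast_ofNat]
  rw [Real.log_div (by norm_num) hε.ne', Real.log_div (by norm_num) hε.ne', hlog8]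
  linarith [Real.log_pos one_lt_two]

lemma exists_two_pow_near_log_eight_div {d : ℕ} (hd : 2 ≤ d) {ε : ℝ} (hε : 1 / (d : ℝ) ≤ ε)
    (hε1 : ε ≤ 1) :
    ∃ h ∈ Icc 1 (2 * Nat.clog 2 d),
      (2 : ℝ) ^ h ≤ Real.log (8 / ε) ∧ Real.log (8 / ε) ≤ 2 * 2 ^ h := by
  have hε0 : 0 < ε := lt_of_lt_of_le (by positivity) hε
  have hupp : Real.log (8 / ε) < 2 ^ (2 * Nat.clog 2 d) :=
    calc Real.log (8 / ε) ≤ Real.log (8 * d) := by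
          refine Real.log_le_log (by positivity) ?_
          rw [div_eq_mul_one_div]
          gcongr
          exact (one_div_le (by positivity) hε0).1 hε
      _ < (d : ℝ) ^ 2 := log_eight_mul_lt_sq (by exact_mod_cast hd)
      _ ≤ (2 ^ Nat.clog 2 d) ^ 2 := by
          gcongr
          exact_mod_cast Nat.le_pow_clog one_lt_two d
      _ = 2 ^ (2 * Nat.clog 2 d) := by rw [mul_comm, pow_mul]
  obtain ⟨h, hh, hle, hlt⟩ :=
    exists_pow_le_lt_mul_pow one_lt_two (two_le_log_eight_div hε0 hε1) hupp
  exact ⟨h, Ico_subset_Icc_self hh, hle, hlt.le⟩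

/-- `q` restricted to the finite set `s` is a probability vector; its values off `s` are
irrelevant. -/
structure IsProbOn {ι : Type*} (s : Finset ι) (q : ι → ℝ) : Prop where
  nonneg : ∀ i ∈ s, 0 ≤ q i
  sum_eq_one : ∑ i ∈ s, q i = 1

lemma isProbOn_uniform {ι : Type*} {s : Finset ι} (hs : s.Nonempty) :
    IsProbOn s fun _ => 1 / (#s : ℝ) := by
  refine ⟨fun _ _ => by positivity, ?_⟩
  rw [sum_const, nsmul_eq_mul, mul_one_div_cancel (by exact_mod_cast hs.card_ne_zero)]

/-- The factor by which one multiplicative-weights step with learning rate `η` and losses `L`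
renormalizes the weights `q`. -/
noncomputable def mwuNormalizer {ι : Type*} (s : Finset ι) (η : ℝ) (q L : ι → ℝ) : ℝ :=
  ∑ i ∈ s, q i * Real.exp (-η * L i)

namespace IsProbOn

variable {ι : Type*} {s : Finset ι} {q L : ι → ℝ}

lemma sum_mul_mem_Icc (hq : IsProbOn s q) {a b : ℝ} (hL : ∀ i ∈ s, L i ∈ Set.Icc a b) :
    ∑ i ∈ s, q i * L i ∈ Set.Icc a b :=
  (convex_Icc a b).sum_mem hq.nonneg hq.sum_eq_one hL

lemma mwuNormalizer_pos (hq : IsProbOn s q) (η : ℝ) (L : ι → ℝ) :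
    0 < mwuNormalizer s η q L := by
  obtain ⟨i, hi, hqi⟩ := exists_ne_zero_of_sum_ne_zero (hq.sum_eq_one.trans_ne one_ne_zero)
  have hnonneg : ∀ j ∈ s, 0 ≤ q j * Real.exp (-η * L j) := fun j hj =>
    mul_nonneg (hq.nonneg j hj) (Real.exp_pos _).le
  exact sum_pos' hnonneg ⟨i, hi, mul_pos ((hq.nonneg i hi).lt_of_ne' hqi) (Real.exp_pos _)⟩

lemma mwuNormalizer_le_exp (hq : IsProbOn s q) {η : ℝ} (hη : 0 ≤ η)
    (hL : ∀ i ∈ s, L i ∈ Set.Icc 0 1) :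
    mwuNormalizer s η q L ≤ Real.exp (-η * ∑ i ∈ s, q i * L i + η ^ 2 / 2) := by
  have hexp : ∀ i ∈ s, Real.exp (-η * L i) ≤ 1 - η * L i + η ^ 2 / 2 := fun i hi => by
    have hsq : (η * L i) ^ 2 ≤ η ^ 2 :=
      pow_le_pow_left₀ (mul_nonneg hη (hL i hi).1) (mul_le_of_le_one_right hη (hL i hi).2) 2
    have := exp_neg_le_quadratic (mul_nonneg hη (hL i hi).1)
    rw [neg_mul]
    linarith
  calc mwuNormalizer s η q L ≤ ∑ i ∈ s, q i * (1 - η * L i + η ^ 2 / 2) :=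
        sum_le_sum fun i hi => mul_le_mul_of_nonneg_left (hexp i hi) (hq.nonneg i hi)
    _ = -η * ∑ i ∈ s, q i * L i + η ^ 2 / 2 + 1 := by
        simp only [mul_add, mul_sub, mul_one, mul_left_comm _ η, sum_add_distrib, sum_sub_distrib,
          ← mul_sum, ← sum_mul, hq.sum_eq_one]
        ring
    _ ≤ Real.exp (-η * ∑ i ∈ s, q i * L i + η ^ 2 / 2) := Real.add_one_le_exp _

end IsProbOn

/-- `q 1, …, q (T + 1)` are the weights of the multiplicative-weights update on `s` with learning
rate `η` and prior `π` against the losses `L 1, …, L T`. -/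
structure IsMWU {ι : Type*} (s : Finset ι) (T : ℕ) (η : ℝ) (π : ι → ℝ) (L q : ℕ → ι → ℝ) :
    Prop where
  init : ∀ i ∈ s, q 1 i = π i
  update : ∀ t ∈ Icc 1 T, ∀ i ∈ s,
    q (t + 1) i = q t i * Real.exp (-η * L t i) / mwuNormalizer s η (q t) (L t)

namespace IsMWU

variable {ι : Type*} {s : Finset ι} {T : ℕ} {η : ℝ} {π : ι → ℝ} {L q : ℕ → ι → ℝ}

lemma isProbOn_succ (h : IsMWU s T η π L q) (hπ : IsProbOn s π) {n : ℕ} (hn : n ≤ T) :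
    IsProbOn s (q (n + 1)) := by
  induction n with
  | zero => exact ⟨fun i hi => (h.init i hi).symm ▸ hπ.nonneg i hi,
      (sum_congr rfl h.init).trans hπ.sum_eq_one⟩
  | succ n ih =>
    have hq := ih (by lia)
    have hstep := h.update (n + 1) (mem_Icc.2 ⟨by lia, hn⟩)
    have hZ := hq.mwuNormalizer_pos η (L (n + 1))
    refine ⟨fun i hi => ?_, ?_⟩
    · rw [hstep i hi]
      exact div_nonneg (mul_nonneg (hq.nonneg i hi) (Real.exp_pos _).le) hZ.le
    · rw [sum_congr rfl hstep, ← sum_div]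
      exact div_self hZ.ne'

lemma isProbOn (h : IsMWU s T η π L q) (hπ : IsProbOn s π) {t : ℕ} (ht : t ∈ Icc 1 T) :
    IsProbOn s (q t) := by
  obtain ⟨ht1, htT⟩ := mem_Icc.1 ht
  obtain ⟨n, rfl⟩ := Nat.exists_eq_add_of_le' ht1
  exact h.isProbOn_succ hπ (by lia)

lemma mul_prod_mwuNormalizer (h : IsMWU s T η π L q) (hπ : IsProbOn s π) {i : ι} (hi : i ∈ s)
    {n : ℕ} (hn : n ≤ T) :
    q (n + 1) i * ∏ t ∈ Icc 1 n, mwuNormalizer s η (q t) (L t) =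
      π i * Real.exp (-η * ∑ t ∈ Icc 1 n, L t i) := by
  induction n with
  | zero => simp [h.init i hi]
  | succ n ih =>
    have hmem : n + 1 ∈ Icc 1 T := mem_Icc.2 ⟨by lia, hn⟩
    have hZ := ((h.isProbOn hπ hmem).mwuNormalizer_pos η (L (n + 1))).ne'
    rw [prod_Icc_succ_top (by lia), sum_Icc_succ_top (by lia), mul_add, Real.exp_add, ← mul_assoc,
      ← mul_assoc, ← ih (by lia), h.update _ hmem i hi]
    field_simp

lemma sum_prior_mul_exp (h : IsMWU s T η π L q) (hπ : IsProbOn s π) :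
    ∑ i ∈ s, π i * Real.exp (-η * ∑ t ∈ Icc 1 T, L t i) =
      ∏ t ∈ Icc 1 T, mwuNormalizer s η (q t) (L t) := by
  rw [← sum_congr rfl fun i hi => h.mul_prod_mwuNormalizer hπ hi le_rfl, ← sum_mul,
    (h.isProbOn_succ hπ le_rfl).sum_eq_one, one_mul]

lemma sum_prior_mul_exp_le (h : IsMWU s T η π L q) (hπ : IsProbOn s π) (hη : 0 ≤ η)
    (hL : ∀ t ∈ Icc 1 T, ∀ i ∈ s, L t i ∈ Set.Icc 0 1) :
    ∑ i ∈ s, π i * Real.exp (-η * ∑ t ∈ Icc 1 T, L t i) ≤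
      Real.exp (-η * ∑ t ∈ Icc 1 T, ∑ i ∈ s, q t i * L t i + T * (η ^ 2 / 2)) := by
  calc ∑ i ∈ s, π i * Real.exp (-η * ∑ t ∈ Icc 1 T, L t i)
      = ∏ t ∈ Icc 1 T, mwuNormalizer s η (q t) (L t) := h.sum_prior_mul_exp hπ
    _ ≤ ∏ t ∈ Icc 1 T, Real.exp (-η * ∑ i ∈ s, q t i * L t i + η ^ 2 / 2) :=
        prod_le_prod (fun t ht => ((h.isProbOn hπ ht).mwuNormalizer_pos η (L t)).le)
          fun t ht => (h.isProbOn hπ ht).mwuNormalizer_le_exp hη (hL t ht)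
    _ = Real.exp (-η * ∑ t ∈ Icc 1 T, ∑ i ∈ s, q t i * L t i + T * (η ^ 2 / 2)) := by
        rw [← Real.exp_sum, sum_add_distrib, ← mul_sum, sum_const, Nat.card_Icc, nsmul_eq_mul,
          Nat.add_sub_cancel]

lemma regret_le (h : IsMWU s T η π L q) (hπ : IsProbOn s π) (hη : 0 < η)
    (hL : ∀ t ∈ Icc 1 T, ∀ i ∈ s, L t i ∈ Set.Icc 0 1) {A : Finset ι} (hA : A ⊆ s) {c B : ℝ}
    (hc : 0 < c) (hcA : c ≤ ∑ i ∈ A, π i) (hB : ∀ i ∈ A, ∑ t ∈ Icc 1 T, L t i ≤ B) :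
    ∑ t ∈ Icc 1 T, ∑ i ∈ s, q t i * L t i - B ≤ Real.log (1 / c) / η + η * T / 2 := by
  set P := ∑ t ∈ Icc 1 T, ∑ i ∈ s, q t i * L t i
  have hpotential : c * Real.exp (-η * B) ≤ Real.exp (-η * P + T * (η ^ 2 / 2)) :=
    calc c * Real.exp (-η * B) ≤ (∑ i ∈ A, π i) * Real.exp (-η * B) := by gcongr
      _ = ∑ i ∈ A, π i * Real.exp (-η * B) := sum_mul _ _ _
      _ ≤ ∑ i ∈ A, π i * Real.exp (-η * ∑ t ∈ Icc 1 T, L t i) := by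
          refine sum_le_sum fun i hi => mul_le_mul_of_nonneg_left ?_ (hπ.nonneg i (hA hi))
          exact Real.exp_le_exp.2 (mul_le_mul_of_nonpos_left (hB i hi) (neg_nonpos.2 hη.le))
      _ ≤ ∑ i ∈ s, π i * Real.exp (-η * ∑ t ∈ Icc 1 T, L t i) :=
          sum_le_sum_of_subset_of_nonneg hA fun i hi _ =>
            mul_nonneg (hπ.nonneg i hi) (Real.exp_pos _).le
      _ ≤ Real.exp (-η * P + T * (η ^ 2 / 2)) := h.sum_prior_mul_exp_le hπ hη.le hL
  have hlog := Real.log_le_log (by positivity) hpotential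
  rw [Real.log_exp, Real.log_mul hc.ne' (Real.exp_pos _).ne', Real.log_exp] at hlog
  rw [one_div, Real.log_inv]
  calc P - B = η * (P - B) / η := (mul_div_cancel_left₀ _ hη.ne').symm
    _ ≤ (-Real.log c + T * (η ^ 2 / 2)) / η := by
        gcongr
        linarith
    _ = -Real.log c / η + η * T / 2 := by field_simp

lemma regret_le_two_mul_sqrt {y : ℝ} (h : IsMWU s T √(y / T) π L q) (hπ : IsProbOn s π)
    (hT : 0 < T) (hL : ∀ t ∈ Icc 1 T, ∀ i ∈ s, L t i ∈ Set.Icc 0 1) {A : Finset ι} (hA : A ⊆ s)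
    {c B : ℝ} (hc : 0 < c) (hcA : c ≤ ∑ i ∈ A, π i) (hB : ∀ i ∈ A, ∑ t ∈ Icc 1 T, L t i ≤ B)
    (hy : 0 < y) (hlow : y ≤ Real.log (1 / c)) (hupp : Real.log (1 / c) ≤ 2 * y) :
    ∑ t ∈ Icc 1 T, ∑ i ∈ s, q t i * L t i - B ≤ 2 * √(T * Real.log (1 / c)) := by
  have hT' : (0 : ℝ) < T := by exact_mod_cast hT
  exact (h.regret_le hπ (by positivity) hL hA hc hcA hB).trans
    (div_sqrt_add_sqrt_mul_half_le hT' hy hlow hupp)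

lemma uniform_regret_le (h : IsMWU s T √(Real.log #s / T) (fun _ => 1 / (#s : ℝ)) L q)
    (hs : 2 ≤ #s) (hT : 0 < T) (hL : ∀ t ∈ Icc 1 T, ∀ i ∈ s, L t i ∈ Set.Icc 0 1) {i : ι}
    (hi : i ∈ s) :
    ∑ t ∈ Icc 1 T, ∑ j ∈ s, q t j * L t j - ∑ t ∈ Icc 1 T, L t i ≤ 2 * √(T * Real.log #s) := by
  have hs' : (1 : ℝ) < #s := by exact_mod_cast hs
  have hlog : 0 < Real.log #s := Real.log_pos hs'
  have hbound := h.regret_le_two_mul_sqrt (isProbOn_uniform ⟨i, hi⟩) hT hL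
    (singleton_subset_iff.2 hi) (one_div_pos.2 (zero_lt_one.trans hs'))
    (sum_singleton (fun _ => 1 / (#s : ℝ)) i).ge (fun j hj => by rw [mem_singleton.1 hj]) hlog
  rw [one_div_one_div] at hbound
  exact hbound le_rfl (by linarith)

end IsMWU

section Loss

variable {d : ℕ} {p l : Fin d → ℝ}

lemma lossInner_toMat (f : Fin d → Fin d) : lossInner (toMat d f) p l = ∑ i, p i * l (f i) := by
  simp [lossInner, toMat]

lemma lossInner_sum_mul {ι : Type*} (s : Finset ι) (w : ι → ℝ)
    (Φ : ι → Matrix (Fin d) (Fin d) ℝ) :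
    lossInner (fun i j => ∑ a ∈ s, w a * Φ a i j) p l = ∑ a ∈ s, w a * lossInner (Φ a) p l := by
  simp only [lossInner, mul_sum, sum_mul, mul_assoc]
  exact (sum_congr rfl fun i _ => sum_comm).trans sum_comm

lemma lossInner_mixMat (q : (Fin d → Fin d) → ℝ) :
    lossInner (mixMat d q) p l = ∑ f, q f * lossInner (toMat d f) p l :=
  lossInner_sum_mul univ q (toMat d)

lemma lossInner_toMat_mem_Icc (hp : InSimplex d p) (hl : ∀ i, l i ∈ Set.Icc 0 1)
    (f : Fin d → Fin d) : lossInner (toMat d f) p l ∈ Set.Icc 0 1 := by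
  have hp' : IsProbOn univ p := ⟨fun i _ => hp.1 i, hp.2⟩
  rw [lossInner_toMat]
  exact hp'.sum_mul_mem_Icc fun i _ => hl (f i)

lemma lossInner_mixMat_mem_Icc {q : (Fin d → Fin d) → ℝ} (hq : IsProbOn univ q)
    (hp : InSimplex d p) (hl : ∀ i, l i ∈ Set.Icc 0 1) :
    lossInner (mixMat d q) p l ∈ Set.Icc 0 1 := by
  rw [lossInner_mixMat]
  exact hq.sum_mul_mem_Icc fun f _ => lossInner_toMat_mem_Icc hp hl f

lemma sum_mul_eq_lossInner_of_stationary {φ : Matrix (Fin d) (Fin d) ℝ}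
    (hstat : ∀ i, p i = ∑ j, φ j i * p j) : ∑ i, p i * l i = lossInner φ p l := by
  calc ∑ i, p i * l i = ∑ i, (∑ j, φ j i * p j) * l i :=
        sum_congr rfl fun i _ => by rw [← hstat i]
    _ = lossInner φ p l := by
        simp only [lossInner, sum_mul, mul_assoc]
        exact sum_comm

lemma IsMWU.stationary_regret_le {ι : Type*} {s : Finset ι} {T : ℕ} {ℓ p : ℕ → Fin d → ℝ}
    {φ : ℕ → ι → Matrix (Fin d) (Fin d) ℝ} {w : ℕ → ι → ℝ}
    (h : IsMWU s T √(Real.log #s / T) (fun _ => 1 / (#s : ℝ))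
      (fun t k => lossInner (φ t k) (p t) (ℓ t)) w)
    (hs : 2 ≤ #s) (hT : 0 < T)
    (hloss : ∀ t ∈ Icc 1 T, ∀ k ∈ s, lossInner (φ t k) (p t) (ℓ t) ∈ Set.Icc 0 1)
    (hstat : ∀ t ∈ Icc 1 T, ∀ i, p t i = ∑ j, (∑ k ∈ s, w t k * φ t k j i) * p t j)
    {k : ι} (hk : k ∈ s) :
    ∑ t ∈ Icc 1 T, ∑ i, p t i * ℓ t i - ∑ t ∈ Icc 1 T, lossInner (φ t k) (p t) (ℓ t) ≤
      2 * √(T * Real.log #s) := by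
  have hplay : ∀ t ∈ Icc 1 T,
      ∑ i, p t i * ℓ t i = ∑ k ∈ s, w t k * lossInner (φ t k) (p t) (ℓ t) := fun t ht =>
    (sum_mul_eq_lossInner_of_stationary (hstat t ht)).trans (lossInner_sum_mul s (w t) (φ t))
  rw [sum_congr rfl hplay]
  exact h.uniform_regret_le hs hT hloss hk

end Loss

section Prior

variable {d : ℕ}

lemma piInd_toMat (ψ : Matrix (Fin d) (Fin d) ℝ) (f : Fin d → Fin d) :
    piInd ψ (toMat d f) = ∏ i, ψ i (f i) := by
  simp [piInd, toMat]

lemma RowStochastic.isProbOn_piInd {ψ : Matrix (Fin d) (Fin d) ℝ} (hψ : RowStochastic ψ) :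
    IsProbOn univ fun f => piInd ψ (toMat d f) := by
  simp only [piInd_toMat]
  refine ⟨fun f _ => prod_nonneg fun i _ => (hψ i).1 (f i), ?_⟩
  calc ∑ f : Fin d → Fin d, ∏ i, ψ i (f i) = ∏ i, ∑ j, ψ i j :=
        (Fintype.prod_sum fun i j => ψ i j).symm
    _ = 1 := prod_eq_one fun i _ => (hψ i).2

/-- The matrix of `f` mixed with the uniform one. Constant maps give `ψ^k` and the identity gives
`ψ^{d+1}`, so the `d + 1` components of the prior are treated at once. -/
noncomputable def smoothMat (d : ℕ) (f : Fin d → Fin d) : Matrix (Fin d) (Fin d) ℝ :=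
  fun i j => ((d : ℝ) - 2) / ((d : ℝ) - 1) * toMat d f i j + 1 / ((d : ℝ) * ((d : ℝ) - 1))

lemma psiK_eq_smoothMat (k : Fin d) : psiK d k = smoothMat d fun _ => k := by
  ext i j
  simp only [psiK, smoothMat, toMat, eq_comm]

lemma psiSelf_eq_smoothMat : psiSelf d = smoothMat d id := rfl

lemma rowStochastic_smoothMat (hd : 2 ≤ d) (f : Fin d → Fin d) :
    RowStochastic (smoothMat d f) := by
  have hd1 : (0 : ℝ) < (d : ℝ) - 1 := by
    rw [sub_pos]
    exact_mod_cast hd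
  have hd2 : (0 : ℝ) ≤ (d : ℝ) - 2 := by
    rw [sub_nonneg]
    exact_mod_cast hd
  refine fun i => ⟨fun j => ?_, ?_⟩
  · unfold smoothMat toMat
    positivity
  · simp only [smoothMat, toMat, sum_add_distrib, ← mul_sum, sum_ite_eq, mem_univ, if_true,
      sum_const, card_univ, Fintype.card_fin, nsmul_eq_mul]
    field_simp
    ring

lemma piInd_smoothMat_toMat (hd : 2 ≤ d) (f : Fin d → Fin d) :
    piInd (smoothMat d f) (toMat d f) = (1 - 1 / (d : ℝ)) ^ d := by
  have hd1 : (d : ℝ) - 1 ≠ 0 := by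
    rw [sub_ne_zero]
    exact_mod_cast (show d ≠ 1 by lia)
  have hentry :
      ((d : ℝ) - 2) / ((d : ℝ) - 1) + 1 / ((d : ℝ) * ((d : ℝ) - 1)) = 1 - 1 / (d : ℝ) := by
    field_simp
    ring
  simp only [piInd_toMat, smoothMat, toMat, if_true, mul_one, hentry, prod_const, card_univ,
    Fintype.card_fin]

lemma isProbOn_piInd_smoothMat (hd : 2 ≤ d) (g : Fin d → Fin d) :
    IsProbOn univ fun f => piInd (smoothMat d g) (toMat d f) :=
  (rowStochastic_smoothMat hd g).isProbOn_piInd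

lemma isProbOn_priorPi (hd : 2 ≤ d) : IsProbOn univ fun f => priorPi d (toMat d f) := by
  have hcomp := isProbOn_piInd_smoothMat hd
  have hd0 : (d : ℝ) ≠ 0 := by positivity
  simp only [priorPi, psiK_eq_smoothMat, psiSelf_eq_smoothMat]
  refine ⟨fun f _ => ?_, ?_⟩
  · have hself := (hcomp id).nonneg f (mem_univ f)
    have hunif : 0 ≤ ∑ k, piInd (smoothMat d fun _ => k) (toMat d f) :=
      sum_nonneg fun k _ => (hcomp fun _ => k).nonneg f (mem_univ f)
    exact add_nonneg (mul_nonneg (by positivity) hunif) (mul_nonneg (by positivity) hself)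
  · rw [sum_add_distrib, ← mul_sum, ← mul_sum, sum_comm, (hcomp id).sum_eq_one,
      sum_congr rfl fun k _ => (hcomp fun _ => k).sum_eq_one, sum_const, card_univ,
      Fintype.card_fin, nsmul_eq_mul]
    field_simp
    norm_num

lemma one_div_le_priorPi_const (hd : 2 ≤ d) (k : Fin d) :
    1 / (8 * (d : ℝ)) ≤ priorPi d (toMat d fun _ => k) := by
  have hcomp := fun g => (isProbOn_piInd_smoothMat hd g).nonneg (fun _ => k) (mem_univ _)
  have hunif : (1 / 4 : ℝ) ≤ ∑ k', piInd (smoothMat d fun _ => k') (toMat d fun _ => k) :=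
    calc (1 / 4 : ℝ) ≤ (1 - 1 / (d : ℝ)) ^ d := one_quarter_le_one_sub_one_div_pow hd
      _ = piInd (smoothMat d fun _ => k) (toMat d fun _ => k) := (piInd_smoothMat_toMat hd _).symm
      _ ≤ ∑ k', piInd (smoothMat d fun _ => k') (toMat d fun _ => k) :=
          single_le_sum (f := fun k' => piInd (smoothMat d fun _ => k') (toMat d fun _ => k))
            (fun k' _ => hcomp fun _ => k') (mem_univ k)
  simp only [priorPi, psiK_eq_smoothMat, psiSelf_eq_smoothMat]
  calc 1 / (8 * (d : ℝ)) = 1 / (2 * d) * (1 / 4) + 1 / 2 * 0 := by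
        field_simp
        norm_num
    _ ≤ _ := by
        gcongr
        exact hcomp id

lemma card_div_le_sum_priorPi_const (hd : 2 ≤ d) (A : Finset (Fin d)) :
    #A / (8 * d : ℝ) ≤ ∑ k ∈ A, priorPi d (toMat d fun _ => k) := by
  have := card_nsmul_le_sum A _ _ fun k _ => one_div_le_priorPi_const hd k
  rwa [nsmul_eq_mul, mul_one_div] at this

lemma IsMWU.quantile_regret_le {T : ℕ} {y : ℝ} {ℓ p : ℕ → Fin d → ℝ}
    {q : ℕ → (Fin d → Fin d) → ℝ}
    (h : IsMWU univ T √(y / T) (fun f => priorPi d (toMat d f))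
      (fun t f => lossInner (toMat d f) (p t) (ℓ t)) q)
    (hd : 2 ≤ d) (hT : 0 < T) (hℓ : ∀ t ∈ Icc 1 T, ∀ i, ℓ t i ∈ Set.Icc 0 1)
    (hp : ∀ t ∈ Icc 1 T, InSimplex d (p t)) {ε : ℝ} (hε : 0 < ε) (hy : 0 < y)
    (hlow : y ≤ Real.log (8 / ε)) (hupp : Real.log (8 / ε) ≤ 2 * y) {A : Finset (Fin d)}
    (hA : ε * d ≤ #A) {B : ℝ} (hB : ∀ i ∈ A, ∑ t ∈ Icc 1 T, ℓ t i ≤ B) :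
    ∑ t ∈ Icc 1 T, lossInner (mixMat d (q t)) (p t) (ℓ t) - B ≤
      2 * √(T * Real.log (8 / ε)) := by
  have : NeZero d := ⟨by lia⟩
  have hmass : ε / 8 ≤ ∑ f ∈ A.image (Function.const (Fin d)), priorPi d (toMat d f) := by
    rw [sum_image Function.const_injective.injOn]
    refine le_trans ?_ (card_div_le_sum_priorPi_const hd A)
    rw [div_le_div_iff₀ (by norm_num) (by positivity)]
    linarith
  have hloss : ∀ f ∈ A.image (Function.const (Fin d)),
      ∑ t ∈ Icc 1 T, lossInner (toMat d f) (p t) (ℓ t) ≤ B := by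
    refine forall_mem_image.2 fun k hk => le_of_eq_of_le (sum_congr rfl fun t ht => ?_) (hB k hk)
    simp only [lossInner_toMat, Function.const_apply, ← sum_mul, (hp t ht).2, one_mul]
  simp only [lossInner_mixMat]
  rw [← one_div_div ε 8] at hlow hupp ⊢
  exact h.regret_le_two_mul_sqrt (isProbOn_priorPi hd) hT
    (fun t ht f _ => lossInner_toMat_mem_Icc (hp t ht) (hℓ t ht) f) (subset_univ _) (by positivity)
    hmass hloss hy hlow hupp

end Prior

/-- The meta MWU algorithm of Statement 10 achieves near-optimal ε-quantile
regret: there is a universal `C > 0` such that for all `d ≥ 2`, `T ≥ 1`, losses in `[0,1]^d`,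
`ε ∈ [1/d, 1]`, and any expert `iε` whose cumulative loss is the `⌈εd⌉`-th smallest,
`Σ_t ⟨p_t, ℓ_t⟩ − Σ_t ℓ_{t,iε} ≤ C (√(T log(2/ε)) + √(T(1 + log(1 + log d))))`. -/
theorem stmt12 :
    ∃ C > (0 : ℝ),
      ∀ (d T : ℕ), 2 ≤ d → 1 ≤ T →
      ∀ (ℓ p : ℕ → Fin d → ℝ) (qB : ℕ → ℕ → (Fin d → Fin d) → ℝ) (w : ℕ → ℕ → ℝ),
        (∀ t ∈ Finset.Icc 1 T, ∀ i, 0 ≤ ℓ t i ∧ ℓ t i ≤ 1) →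
        (∀ t ∈ Finset.Icc 1 T, InSimplex d (p t)) →
        (∀ h ∈ Finset.Icc 1 (2 * Nat.clog 2 d), ∀ f, qB h 1 f = priorPi d (toMat d f)) →
        (∀ h ∈ Finset.Icc 1 (2 * Nat.clog 2 d), ∀ t ∈ Finset.Icc 1 T, ∀ f,
          qB h (t + 1) f =
            qB h t f *
                Real.exp (-Real.sqrt ((2 : ℝ) ^ h / (T : ℝ)) *
                  lossInner (toMat d f) (p t) (ℓ t)) /
              ∑ g, qB h t g *
                Real.exp (-Real.sqrt ((2 : ℝ) ^ h / (T : ℝ)) *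
                  lossInner (toMat d g) (p t) (ℓ t))) →
        (∀ h ∈ Finset.Icc 1 (2 * Nat.clog 2 d), w 1 h = 1 / (2 * Nat.clog 2 d : ℝ)) →
        (∀ t ∈ Finset.Icc 1 T, ∀ h ∈ Finset.Icc 1 (2 * Nat.clog 2 d),
          w (t + 1) h =
            w t h *
                Real.exp (-Real.sqrt (Real.log (2 * Nat.clog 2 d : ℝ) / (T : ℝ)) *
                  lossInner (mixMat d (qB h t)) (p t) (ℓ t)) /
              ∑ h' ∈ Finset.Icc 1 (2 * Nat.clog 2 d), w t h' *
                Real.exp (-Real.sqrt (Real.log (2 * Nat.clog 2 d : ℝ) / (T : ℝ)) *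
                  lossInner (mixMat d (qB h' t)) (p t) (ℓ t))) →
        (∀ t ∈ Finset.Icc 1 T, ∀ i,
          p t i = ∑ j, (∑ h ∈ Finset.Icc 1 (2 * Nat.clog 2 d),
            w t h * mixMat d (qB h t) j i) * p t j) →
        ∀ ε : ℝ, 1 / (d : ℝ) ≤ ε → ε ≤ 1 →
        ∀ iε : Fin d,
          -- `iε` has the `⌈εd⌉`-th smallest cumulative loss
          ⌈ε * d⌉₊ ≤ (Finset.univ.filter fun i : Fin d =>
              (∑ t ∈ Finset.Icc 1 T, ℓ t i) ≤ ∑ t ∈ Finset.Icc 1 T, ℓ t iε).card →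
          (Finset.univ.filter fun i : Fin d =>
              (∑ t ∈ Finset.Icc 1 T, ℓ t i) < ∑ t ∈ Finset.Icc 1 T, ℓ t iε).card < ⌈ε * d⌉₊ →
          (∑ t ∈ Finset.Icc 1 T, ∑ i, p t i * ℓ t i) - (∑ t ∈ Finset.Icc 1 T, ℓ t iε) ≤
            C * (Real.sqrt ((T : ℝ) * Real.log (2 / ε)) +
              Real.sqrt ((T : ℝ) * (1 + Real.log (1 + Real.log d)))) := by
  refine ⟨4, by norm_num, ?_⟩
  intro d T hd hT ℓ p qB w hℓ hp hq₁ hq hw₁ hw hstat ε hε hε1 iε hcard _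
  have hε0 : 0 < ε := lt_of_lt_of_le (by positivity) hε
  have hM : (2 * Nat.clog 2 d : ℝ) = #(Icc 1 (2 * Nat.clog 2 d)) := by simp
  have hM2 : 2 ≤ #(Icc 1 (2 * Nat.clog 2 d)) := by
    simpa using Nat.succ_le_of_lt (Nat.clog_pos one_lt_two hd)
  simp only [hM] at hw₁ hw
  have hbase : ∀ h ∈ Icc 1 (2 * Nat.clog 2 d), IsMWU univ T √(2 ^ h / T)
      (fun f => priorPi d (toMat d f)) (fun t f => lossInner (toMat d f) (p t) (ℓ t)) (qB h) :=
    fun h hh => ⟨fun f _ => hq₁ h hh f, fun t ht f _ => hq h hh t ht f⟩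
  have hmeta : IsMWU (Icc 1 (2 * Nat.clog 2 d)) T _ _
      (fun t h => lossInner (mixMat d (qB h t)) (p t) (ℓ t)) w := ⟨hw₁, hw⟩
  obtain ⟨h, hh, hlow, hupp⟩ := exists_two_pow_near_log_eight_div hd hε hε1
  have hbase_regret := (hbase h hh).quantile_regret_le hd hT hℓ hp hε0 (by positivity) hlow hupp
    ((Nat.le_ceil _).trans (Nat.cast_le.2 hcard)) fun i hi => (mem_filter.1 hi).2
  have hmeta_regret := hmeta.stationary_regret_le hM2 hT (fun t ht k hk => lossInner_mixMat_mem_Icc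
    ((hbase k hk).isProbOn (isProbOn_priorPi hd) ht) (hp t ht) (hℓ t ht)) hstat hh
  have hquantile := sqrt_mul_le_two_mul_sqrt_mul T.cast_nonneg (log_eight_div_le_four_mul hε0 hε1)
  have hgrid := sqrt_mul_le_two_mul_sqrt_mul T.cast_nonneg (log_two_mul_clog_le hd)
  rw [hM] at hgrid
  linarith
end

section
/- In an N-player normal-form game where each player has d actions and losses bounded in [−1,1], the change in any player's expected loss vector between consecutive rounds is controlled by the other players' strategy changes: ‖ℓ_t^{(n)} − ℓ_{t−1}^{(n)}‖_∞² ≤ (N−1) · Σ_{j ≠ n} ‖p_t^{(j)} − p_{t−1}^{(j)}‖_1² for every round t and player n. -/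
open Finset

/-- Player `n`'s expected loss for action `a` when the other players play the mixed strategies
`p j`: `ℓ_a^{(n)} = Σ_{a^{(−n)}} (Π_{j ≠ n} p_{a_j}^{(j)}) ℓ^{(n)}(a, a^{(−n)})`. -/
noncomputable def expLoss (N d : ℕ) (n : Fin N) (loss : (Fin N → Fin d) → ℝ)
    (p : Fin N → Fin d → ℝ) (a : Fin d) : ℝ :=
  ∑ σ : {j : Fin N // j ≠ n} → Fin d,
    (∏ j : {j : Fin N // j ≠ n}, p j.1 (σ j)) *
      loss fun j => if h : j = n then a else σ ⟨j, h⟩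

/-!
With the other players' strategies regarded as vectors of `ℓ¹`, the expected loss is a multilinear
form, and its norm is at most the largest absolute loss because the sum over action profiles of
`∏ j, |p j (σ j)|` factors as `∏ j, ‖p j‖₁`. Replacing one argument at a time, such a form is
Lipschitz for the sum of the norms on a product of unit balls, and the Cauchy–Schwarz inequality
over the `N - 1` opponents turns the square of that sum into a sum of squares.
-/

section MixedExtension

variable {𝕜 F ι : Type*} [NontriviallyNormedField 𝕜] [SeminormedAddCommGroup F] [NormedSpace 𝕜 F]
  [Fintype ι]

theorem norm_multilinearMap_sub_le_of_norm_le_one {E : ι → Type*}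
    [∀ i, SeminormedAddCommGroup (E i)] [∀ i, NormedSpace 𝕜 (E i)] (f : MultilinearMap 𝕜 E F)
    {C : ℝ} (hC : 0 ≤ C) (hf : ∀ m, ‖f m‖ ≤ C * ∏ i, ‖m i‖) {x y : ∀ i, E i}
    (hx : ∀ i, ‖x i‖ ≤ 1) (hy : ∀ i, ‖y i‖ ≤ 1) :
    ‖f x - f y‖ ≤ C * ∑ i, ‖x i - y i‖ := by
  classical
  refine (f.norm_image_sub_le_of_bound' hC hf x y).trans ?_
  gcongr with i
  calc ∏ j, (if j = i then ‖x i - y i‖ else max ‖x j‖ ‖y j‖)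
      ≤ ∏ j, (if j = i then ‖x i - y i‖ else 1) := by
        refine prod_le_prod (fun j _ => by positivity) fun j _ => ?_
        split_ifs
        exacts [le_rfl, max_le (hx j) (hy j)]
    _ = ‖x i - y i‖ := Fintype.prod_ite_eq' i _

variable [DecidableEq ι] {κ : ι → Type*} [∀ i, Fintype (κ i)]

variable (𝕜) in
/-- The mixed extension of a function `L` of pure action profiles: the multilinear map taking a
family of weight vectors `p` to the sum of `L` against the product weights. The weight vectors live
in `PiLp 1`, so that their norm is the `ℓ¹` norm. -/
noncomputable def mixedExtension (L : (∀ i, κ i) → F) :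
    MultilinearMap 𝕜 (fun i => PiLp 1 fun _ : κ i => 𝕜) F :=
  ∑ σ, ((MultilinearMap.mkPiAlgebra 𝕜 ι 𝕜).compLinearMap
    fun i => PiLp.projₗ 1 (fun _ : κ i => 𝕜) (σ i)).smulRight (L σ)

theorem mixedExtension_apply (L : (∀ i, κ i) → F) (p : ∀ i, PiLp 1 fun _ : κ i => 𝕜) :
    mixedExtension 𝕜 L p = ∑ σ, (∏ i, p i (σ i)) • L σ := by
  simp [mixedExtension]

theorem norm_mixedExtension_le {L : (∀ i, κ i) → F} {C : ℝ} (hL : ∀ σ, ‖L σ‖ ≤ C)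
    (p : ∀ i, PiLp 1 fun _ : κ i => 𝕜) : ‖mixedExtension 𝕜 L p‖ ≤ C * ∏ i, ‖p i‖ := by
  calc ‖mixedExtension 𝕜 L p‖
      ≤ ∑ σ : ∀ i, κ i, ‖(∏ i, p i (σ i)) • L σ‖ := by
        rw [mixedExtension_apply]
        exact norm_sum_le _ _
    _ ≤ ∑ σ : ∀ i, κ i, C * ∏ i, ‖p i (σ i)‖ := by
        gcongr with σ
        rw [norm_smul, norm_prod, mul_comm]
        gcongr
        exact hL σ
    _ = C * ∏ i, ‖p i‖ := by
        simp only [← mul_sum, PiLp.norm_eq_of_L1, Fintype.prod_sum]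

end MixedExtension

section ExpectedLoss

variable {N d : ℕ} {n : Fin N} {loss : (Fin N → Fin d) → ℝ}

theorem expLoss_eq_mixedExtension (p : Fin N → Fin d → ℝ) (a : Fin d) :
    expLoss N d n loss p a =
      mixedExtension ℝ (fun σ : {j // j ≠ n} → Fin d =>
          loss fun j => if h : j = n then a else σ ⟨j, h⟩)
        fun j => WithLp.toLp 1 (p j) := by
  simp only [expLoss, mixedExtension_apply, smul_eq_mul]

theorem abs_expLoss_sub_le {C : ℝ} (hloss : ∀ s, |loss s| ≤ C) {p q : Fin N → Fin d → ℝ}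
    (hp : ∀ j ≠ n, ∑ i, |p j i| ≤ 1) (hq : ∀ j ≠ n, ∑ i, |q j i| ≤ 1) (a : Fin d) :
    |expLoss N d n loss p a - expLoss N d n loss q a| ≤
      C * ∑ j ∈ univ.erase n, ∑ i, |p j i - q j i| := by
  have hC : 0 ≤ C := (abs_nonneg _).trans (hloss fun _ => a)
  have norm_toLp (v : Fin d → ℝ) : ‖WithLp.toLp 1 v‖ = ∑ i, |v i| := PiLp.norm_eq_of_L1 _
  have norm_toLp_le_one {r : Fin N → Fin d → ℝ} (hr : ∀ j ≠ n, ∑ i, |r j i| ≤ 1)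
      (j : {j // j ≠ n}) : ‖WithLp.toLp 1 (r j)‖ ≤ 1 :=
    (norm_toLp _).trans_le (hr j j.property)
  calc |expLoss N d n loss p a - expLoss N d n loss q a|
      ≤ C * ∑ j : {j // j ≠ n}, ‖WithLp.toLp 1 (p j) - WithLp.toLp 1 (q j)‖ := by
        rw [expLoss_eq_mixedExtension, expLoss_eq_mixedExtension, ← Real.norm_eq_abs]
        exact norm_multilinearMap_sub_le_of_norm_le_one _ hC
          (norm_mixedExtension_le fun σ => hloss _) (norm_toLp_le_one hp) (norm_toLp_le_one hq)
    _ = C * ∑ j : {j // j ≠ n}, ∑ i, |p j i - q j i| := by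
        simp only [← WithLp.toLp_sub, norm_toLp, Pi.sub_apply]
    _ = C * ∑ j ∈ univ.erase n, ∑ i, |p j i - q j i| := by
        have mem_opponents (j : Fin N) : j ∈ univ.erase n ↔ j ≠ n := by simp
        rw [sum_subtype _ mem_opponents]

end ExpectedLoss

theorem InSimplex.sum_abs_eq_one {d : ℕ} {p : Fin d → ℝ} (hp : InSimplex d p) :
    ∑ i, |p i| = 1 := by
  simpa only [abs_of_nonneg (hp.1 _)] using hp.2

theorem stmt16_general (N d : ℕ) (hd : 1 ≤ d) (n : Fin N) (loss : (Fin N → Fin d) → ℝ) {C : ℝ}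
    (hloss : ∀ s, |loss s| ≤ C) (pPrev pCur : Fin N → Fin d → ℝ)
    (hPrev : ∀ j ≠ n, ∑ i, |pPrev j i| ≤ 1) (hCur : ∀ j ≠ n, ∑ i, |pCur j i| ≤ 1) :
    (⨆ a : Fin d, |expLoss N d n loss pCur a - expLoss N d n loss pPrev a|) ^ 2 ≤
      C ^ 2 * (((N : ℝ) - 1) *
        ∑ j ∈ univ.erase n, (∑ i, |pCur j i - pPrev j i|) ^ 2) := by
  have : Nonempty (Fin d) := ⟨⟨0, hd⟩⟩
  have card_opponents : ((univ.erase n).card : ℝ) = N - 1 := by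
    simp [card_erase_of_mem, Nat.cast_pred n.pos]
  calc (⨆ a : Fin d, |expLoss N d n loss pCur a - expLoss N d n loss pPrev a|) ^ 2
      ≤ (C * ∑ j ∈ univ.erase n, ∑ i, |pCur j i - pPrev j i|) ^ 2 := by
        gcongr
        · exact Real.iSup_nonneg fun a => abs_nonneg _
        · exact ciSup_le (abs_expLoss_sub_le hloss hCur hPrev)
    _ = C ^ 2 * (∑ j ∈ univ.erase n, ∑ i, |pCur j i - pPrev j i|) ^ 2 := mul_pow _ _ _
    _ ≤ C ^ 2 * (((N : ℝ) - 1) *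
          ∑ j ∈ univ.erase n, (∑ i, |pCur j i - pPrev j i|) ^ 2) := by
        gcongr
        rw [← card_opponents]
        exact sq_sum_le_card_mul_sum_sq

/-- In an `N`-player game with `d` actions per player and losses in `[−1,1]`,
the change of any player's expected loss vector between consecutive rounds satisfies
`‖ℓ_t^{(n)} − ℓ_{t−1}^{(n)}‖_∞² ≤ (N−1) Σ_{j ≠ n} ‖p_t^{(j)} − p_{t−1}^{(j)}‖_1²`. -/
theorem stmt16 (N d : ℕ) (hN : 1 ≤ N) (hd : 1 ≤ d)
    (loss : Fin N → (Fin N → Fin d) → ℝ)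
    (hloss : ∀ n a, |loss n a| ≤ 1)
    (pPrev pCur : Fin N → Fin d → ℝ)
    (hPrev : ∀ j, InSimplex d (pPrev j)) (hCur : ∀ j, InSimplex d (pCur j))
    (n : Fin N) :
    (⨆ a : Fin d, |expLoss N d n (loss n) pCur a - expLoss N d n (loss n) pPrev a|) ^ 2 ≤
      ((N : ℝ) - 1) *
        ∑ j ∈ Finset.univ.erase n, (∑ i, |pCur j i - pPrev j i|) ^ 2 := by
  simpa only [one_pow, one_mul] using stmt16_general N d hd n (loss n) (hloss n) pPrev pCur
    (fun j _ => (hPrev j).sum_abs_eq_one.le) fun j _ => (hCur j).sum_abs_eq_one.le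
end

section
/- Optimistic MWU iterates are multiplicatively stable: let K ≥ 1, G > 0, and 0 < η ≤ 1/(8G). Let ŵ_1 ∈ Δ(K) have full support and let ℓ_t, m_t ∈ [0, G]^K for all t. Define w_{t,k} ∝ ŵ_{t,k}·exp(−η m_{t,k}) and ŵ_{t+1,k} ∝ ŵ_{t,k}·exp(−η ℓ_{t,k}). Then for every t ≥ 2 and every coordinate k ∈ [K], (1/2)·w_{t−1,k} ≤ w_{t,k} ≤ 2·w_{t−1,k}. -/
open Finset

/-! The normalizations in the updates compose, so `w_t` and `w_{t+1}` are both exponential tilts of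
the same vector `ŵ_t`, with exponents `-η m_t` and `-η (ℓ_t + m_{t+1})`. These exponents differ by
a vector with entries in `[-2ηG, ηG]`, and changing the exponent of a tilt by a vector of
oscillation at most `3ηG` changes each coordinate by a factor of at most `exp (3ηG)`, which is below
`2` when `ηG ≤ 1/8`. -/

section ExpTilt

variable {ι : Type*} [Fintype ι] {p x y : ι → ℝ}

/-- The exponential tilt of the weights `p` by the exponent `x`: the probability vector proportional
to `p k * exp (x k)`, which is one step of multiplicative weights when `x = -η • ℓ`. In the
pointwise order `0 < p` means that the weights are nonnegative and not all zero, which is when the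
normalizing sum is positive. -/
noncomputable def expTilt (p x : ι → ℝ) : ι → ℝ :=
  fun k ↦ p k * Real.exp (x k) / ∑ j, p j * Real.exp (x j)

lemma sum_mul_exp_pos (hp : 0 < p) (x : ι → ℝ) : 0 < ∑ j, p j * Real.exp (x j) := by
  obtain ⟨hp_nonneg, i, hi⟩ := Pi.lt_def.mp hp
  exact sum_pos' (fun j _ ↦ mul_nonneg (hp_nonneg j) (Real.exp_pos _).le)
    ⟨i, mem_univ i, mul_pos hi (Real.exp_pos _)⟩

lemma expTilt_pos (hp : 0 < p) (x : ι → ℝ) : 0 < expTilt p x := by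
  obtain ⟨hp_nonneg, i, hi⟩ := Pi.lt_def.mp hp
  have hZ := sum_mul_exp_pos hp x
  exact Pi.lt_def.mpr ⟨fun j ↦ div_nonneg (mul_nonneg (hp_nonneg j) (Real.exp_pos _).le) hZ.le,
    i, div_pos (mul_pos hi (Real.exp_pos _)) hZ⟩

lemma expTilt_expTilt (hp : 0 < p) (x y : ι → ℝ) :
    expTilt (expTilt p x) y = expTilt p (x + y) := by
  funext k
  have hZ := sum_mul_exp_pos hp x
  simp only [expTilt, Pi.add_apply, Real.exp_add, div_mul_eq_mul_div, mul_assoc, ← sum_div]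
  exact div_div_div_cancel_right₀ hZ.ne' _ _

lemma expTilt_le_exp_sub_mul_expTilt (hp : 0 < p) {a b : ℝ}
    (ha : ∀ j, a ≤ y j - x j) (hb : ∀ j, y j - x j ≤ b) (k : ι) :
    expTilt p y k ≤ Real.exp (b - a) * expTilt p x k := by
  have hp_nonneg : ∀ j, 0 ≤ p j := hp.le
  have hnum : p k * Real.exp (y k) ≤ Real.exp b * (p k * Real.exp (x k)) := by
    rw [mul_left_comm, ← Real.exp_add]
    exact mul_le_mul_of_nonneg_left (Real.exp_le_exp.mpr (by linarith [hb k])) (hp_nonneg k)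
  have hden : Real.exp a * ∑ j, p j * Real.exp (x j) ≤ ∑ j, p j * Real.exp (y j) := by
    rw [mul_sum]
    refine sum_le_sum fun j _ ↦ ?_
    rw [mul_left_comm, ← Real.exp_add]
    exact mul_le_mul_of_nonneg_left (Real.exp_le_exp.mpr (by linarith [ha j])) (hp_nonneg j)
  calc expTilt p y k
      ≤ Real.exp b * (p k * Real.exp (x k)) / (Real.exp a * ∑ j, p j * Real.exp (x j)) :=
        div_le_div₀ (mul_nonneg (Real.exp_pos b).le (mul_nonneg (hp_nonneg k) (Real.exp_pos _).le))
          hnum (mul_pos (Real.exp_pos a) (sum_mul_exp_pos hp x)) hden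
    _ = Real.exp (b - a) * expTilt p x k := by
        rw [Real.exp_sub, expTilt, mul_div_mul_comm]

lemma exp_sub_mul_expTilt_le (hp : 0 < p) {a b : ℝ}
    (ha : ∀ j, a ≤ y j - x j) (hb : ∀ j, y j - x j ≤ b) (k : ι) :
    Real.exp (a - b) * expTilt p x k ≤ expTilt p y k := by
  have h : expTilt p x k ≤ Real.exp (-a - -b) * expTilt p y k :=
    expTilt_le_exp_sub_mul_expTilt hp (fun j ↦ by linarith [hb j]) (fun j ↦ by linarith [ha j]) k
  rwa [show -a - -b = -(a - b) by ring, Real.exp_neg, le_inv_mul_iff₀ (Real.exp_pos _)] at h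

lemma pos_of_forall_eq_expTilt {p x : ℕ → ι → ℝ} (hp : 0 < p 1)
    (hstep : ∀ t, 1 ≤ t → p (t + 1) = expTilt (p t) (x t)) : ∀ t, 1 ≤ t → 0 < p t :=
  Nat.le_induction hp fun t ht ih ↦ hstep t ht ▸ expTilt_pos ih (x t)

end ExpTilt

lemma half_mul_le_and_le_two_mul_of_exp {r a b : ℝ} (hr_pos : 0 < r) (hr : r ≤ 1 / 2)
    (h : Real.exp (-r) * a ≤ b ∧ b ≤ Real.exp r * a) : 1 / 2 * a ≤ b ∧ b ≤ 2 * a := by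
  have ha : 0 ≤ a := by
    have hexp_lt : Real.exp (-r) < Real.exp r := Real.exp_lt_exp.mpr (by linarith)
    have hdiff : 0 ≤ (Real.exp r - Real.exp (-r)) * a := by linarith [h.1.trans h.2]
    exact nonneg_of_mul_nonneg_right hdiff (sub_pos.mpr hexp_lt)
  have hexp_neg : 1 / 2 ≤ Real.exp (-r) := by linarith [Real.add_one_le_exp (-r)]
  have hexp : Real.exp r ≤ 2 :=
    (Real.le_log_iff_exp_le two_pos).mp (by linarith [Real.log_two_gt_d9])
  exact ⟨(mul_le_mul_of_nonneg_right hexp_neg ha).trans h.1,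
    h.2.trans (mul_le_mul_of_nonneg_right hexp ha)⟩

theorem stmt19_general {ι : Type*} [Fintype ι] {G η : ℝ} (hη : 0 ≤ η) {what w ℓ m : ℕ → ι → ℝ}
    (hinit : 0 < what 1)
    (hℓ : ∀ t k, 0 ≤ ℓ t k ∧ ℓ t k ≤ G) (hm : ∀ t k, 0 ≤ m t k ∧ m t k ≤ G)
    (hw : ∀ t, 1 ≤ t → w t = expTilt (what t) (-η • m t))
    (hwhat : ∀ t, 1 ≤ t → what (t + 1) = expTilt (what t) (-η • ℓ t))
    (t : ℕ) (ht : 1 ≤ t) (k : ι) :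
    Real.exp (-(3 * (η * G))) * w t k ≤ w (t + 1) k ∧
      w (t + 1) k ≤ Real.exp (3 * (η * G)) * w t k := by
  have hpos : 0 < what t := pos_of_forall_eq_expTilt hinit hwhat t ht
  have hnext : w (t + 1) = expTilt (what t) (-η • ℓ t + -η • m (t + 1)) := by
    rw [hw (t + 1) (Nat.le_add_left 1 t), hwhat t ht, expTilt_expTilt hpos]
  have hscale : ∀ {c : ℝ}, 0 ≤ c ∧ c ≤ G → 0 ≤ η * c ∧ η * c ≤ η * G :=
    fun hc ↦ ⟨mul_nonneg hη hc.1, mul_le_mul_of_nonneg_left hc.2 hη⟩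
  have hexponent : ∀ j, -(2 * (η * G)) ≤ (-η • ℓ t + -η • m (t + 1)) j - (-η • m t) j ∧
      (-η • ℓ t + -η • m (t + 1)) j - (-η • m t) j ≤ η * G := by
    intro j
    simp only [Pi.add_apply, Pi.smul_apply, smul_eq_mul, neg_mul]
    constructor <;> linarith [hscale (hℓ t j), hscale (hm t j), hscale (hm (t + 1) j)]
  have hlower := exp_sub_mul_expTilt_le hpos
    (fun j ↦ (hexponent j).1) (fun j ↦ (hexponent j).2) k
  have hupper := expTilt_le_exp_sub_mul_expTilt hpos
    (fun j ↦ (hexponent j).1) (fun j ↦ (hexponent j).2) k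
  rw [hw t ht, hnext, show -(3 * (η * G)) = -(2 * (η * G)) - η * G by ring,
    show 3 * (η * G) = η * G - -(2 * (η * G)) by ring]
  exact ⟨hlower, hupper⟩

/-- Optimistic MWU iterates are multiplicatively stable: with `0 < η ≤ 1/(8G)`,
losses and predictions in `[0,G]^K`, full-support `ŵ_1 ∈ Δ(K)`, and updates
`w_{t,k} ∝ ŵ_{t,k} e^{−η m_{t,k}}`, `ŵ_{t+1,k} ∝ ŵ_{t,k} e^{−η ℓ_{t,k}}`, one has
`(1/2) w_{t−1,k} ≤ w_{t,k} ≤ 2 w_{t−1,k}` for all `t ≥ 2` and `k`. -/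
theorem stmt19 (K : ℕ) (hK : 1 ≤ K) (G η : ℝ) (hG : 0 < G) (hη0 : 0 < η)
    (hη : η ≤ 1 / (8 * G))
    (what w ℓ m : ℕ → Fin K → ℝ)
    (hinitpos : ∀ k, 0 < what 1 k) (hinitsum : ∑ k, what 1 k = 1)
    (hℓ : ∀ t k, 0 ≤ ℓ t k ∧ ℓ t k ≤ G) (hm : ∀ t k, 0 ≤ m t k ∧ m t k ≤ G)
    (hw : ∀ t, 1 ≤ t → ∀ k,
      w t k = what t k * Real.exp (-η * m t k) / ∑ j, what t j * Real.exp (-η * m t j))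
    (hwhat : ∀ t, 1 ≤ t → ∀ k,
      what (t + 1) k = what t k * Real.exp (-η * ℓ t k) / ∑ j, what t j * Real.exp (-η * ℓ t j)) :
    ∀ t, 2 ≤ t → ∀ k, (1 / 2) * w (t - 1) k ≤ w t k ∧ w t k ≤ 2 * w (t - 1) k := by
  intro t ht k
  obtain ⟨s, rfl⟩ := Nat.exists_eq_add_of_le' ht
  have hrate : 3 * (η * G) ≤ 1 / 2 := by linarith [(le_div_iff₀ (by positivity)).mp hη]
  exact half_mul_le_and_le_two_mul_of_exp (by positivity) hrate
    (stmt19_general hη0.le (Pi.lt_def.mpr ⟨fun j ↦ (hinitpos j).le, k, hinitpos k⟩) hℓ hm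
      (fun t ht ↦ funext (hw t ht)) (fun t ht ↦ funext (hwhat t ht)) (s + 1) (by lia) k)
end
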